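/- arXiv:2103.15947 — 2 statements merged into one kernel-verified Lean document; each statement's English description precedes it below -/
import Mathlib

section
/- Suppose F : X → ℝ is differentiable with L_W-Lipschitz gradient (F is L_W-smooth), and the FLT iterates satisfy W^t − W^{t−1} = −η Ā ∇F(W^{t−1}) for all t ≥ 1, where η > 0 and Ā is an M × M real matrix acting by left multiplication. Then for every t ≥ 1, F(W^t) − F(W^{t−1}) ≤ (−1/(2η) + L_W/2)·‖W^t − W^{t−1}‖² + (η/2)·‖∇F(W^{t−1}) − Ā·∇F(W^{t−1})‖². (Equation (17)/(eq:17) of the paper's convergence proof.) -/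
open scoped RealInnerProductSpace

/-- Left multiplication by an `M × M` matrix `A` on the space of `M × d` real matrices,
realized as the Euclidean space `EuclideanSpace ℝ (Fin M × Fin d)` (with the Frobenius
inner product), via the Kronecker product `A ⊗ I_d`. -/
noncomputable def matLeftMul (M d : ℕ) (A : Matrix (Fin M) (Fin M) ℝ) :
    EuclideanSpace ℝ (Fin M × Fin d) →L[ℝ] EuclideanSpace ℝ (Fin M × Fin d) :=
  LinearMap.toContinuousLinearMap
    (Matrix.toEuclideanLin (Matrix.kroneckerMap (· * ·) A (1 : Matrix (Fin d) (Fin d) ℝ)))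

theorem descent_aux {E : Type*} [NormedAddCommGroup E] [InnerProductSpace ℝ E] [CompleteSpace E]
    (F : E → ℝ) (g : E → E) (hF : ∀ V, HasGradientAt F (g V) V) (L : ℝ)
    (hs : ∀ U V : E, ‖g U - g V‖ ≤ L * ‖U - V‖) (x δ : E) :
    F (x + δ) - F x ≤ inner ℝ (g x) δ + L / 2 * ‖δ‖ ^ 2 := by
  have hd : ∀ s : ℝ, HasDerivAt
      (fun s : ℝ => F (x + s • δ) - s * inner ℝ (g x) δ - s ^ 2 * (L / 2 * ‖δ‖ ^ 2))
      (inner ℝ (g (x + s • δ)) δ - 1 * inner ℝ (g x) δ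
        - ((2 : ℕ) * s ^ (2 - 1) * 1) * (L / 2 * ‖δ‖ ^ 2)) s := by
    intro s
    have h1 : HasDerivAt (fun s : ℝ => x + s • δ) δ s := by
      simpa using ((hasDerivAt_id s).smul_const δ).const_add x
    have h2 := (hF (x + s • δ)).hasFDerivAt.comp_hasDerivAt s h1
    have h3 : HasDerivAt (fun s : ℝ => F (x + s • δ)) (inner ℝ (g (x + s • δ)) δ) s := by
      simpa [Function.comp_def] using h2
    exact (h3.sub ((hasDerivAt_id s).mul_const _)).sub (((hasDerivAt_id s).pow 2).mul_const _)
  have hanti := antitoneOn_of_deriv_nonpos (convex_Icc (0 : ℝ) 1)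
    (fun s _ => (hd s).continuousAt.continuousWithinAt)
    (fun s _ => (hd s).differentiableAt.differentiableWithinAt)
    (fun s hsm => by
      rw [interior_Icc] at hsm
      rw [(hd s).deriv]
      have h1 : inner ℝ (g (x + s • δ) - g x) δ ≤ ‖g (x + s • δ) - g x‖ * ‖δ‖ :=
        real_inner_le_norm _ _
      have h2 := hs (x + s • δ) x
      rw [add_sub_cancel_left, norm_smul, Real.norm_of_nonneg hsm.1.le] at h2
      have h3 := mul_le_mul_of_nonneg_right h2 (norm_nonneg δ)
      rw [inner_sub_left] at h1
      norm_num
      nlinarith)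
  have := hanti (Set.left_mem_Icc.2 zero_le_one) (Set.right_mem_Icc.2 zero_le_one) zero_le_one
  norm_num at this
  linarith

/-- Equation (17) of the paper's convergence proof. -/
theorem flt_eq17 (M d : ℕ) (hM : 1 ≤ M) (hd : 1 ≤ d)
    (Abar : Matrix (Fin M) (Fin M) ℝ)
    (F : EuclideanSpace ℝ (Fin M × Fin d) → ℝ)
    (gradF : EuclideanSpace ℝ (Fin M × Fin d) → EuclideanSpace ℝ (Fin M × Fin d))
    (hF : ∀ V, HasGradientAt F (gradF V) V)
    (LW : ℝ)
    (hsmooth : ∀ U V : EuclideanSpace ℝ (Fin M × Fin d),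
      ‖gradF U - gradF V‖ ≤ LW * ‖U - V‖)
    (η : ℝ) (hη : 0 < η)
    (W : ℕ → EuclideanSpace ℝ (Fin M × Fin d))
    (hupd : ∀ t : ℕ, 1 ≤ t →
      W t - W (t - 1) = -(η • matLeftMul M d Abar (gradF (W (t - 1)))))
    (t : ℕ) (ht : 1 ≤ t) :
    F (W t) - F (W (t - 1)) ≤
      (-(1 / (2 * η)) + LW / 2) * ‖W t - W (t - 1)‖ ^ 2 +
        (η / 2) * ‖gradF (W (t - 1)) - matLeftMul M d Abar (gradF (W (t - 1)))‖ ^ 2 := by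
  have h := descent_aux F gradF hF LW hsmooth (W (t - 1)) (W t - W (t - 1))
  rw [add_sub_cancel] at h
  rw [hupd t ht] at h ⊢
  generalize matLeftMul M d Abar (gradF (W (t - 1))) = a at *
  generalize gradF (W (t - 1)) = g at *
  rw [norm_sub_sq_real]
  rw [inner_neg_right, inner_smul_right, norm_neg, norm_smul, Real.norm_of_nonneg hη.le] at h
  rw [norm_neg, norm_smul, Real.norm_of_nonneg hη.le]
  have e : (-(1 / (2 * η)) + LW / 2) * (η * ‖a‖) ^ 2
      = -(η / 2 * ‖a‖ ^ 2) + LW / 2 * (η * ‖a‖) ^ 2 := by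
    field_simp
  rw [e]
  have : 0 ≤ η / 2 * ‖g‖ ^ 2 := by positivity
  linarith
end

section
/- Suppose F : X → ℝ is L_W-smooth, the FLT iterates satisfy W^t − W^{t−1} = −η Ā ∇F(W^{t−1}) for all 1 ≤ t ≤ T with step size η > 0, and the per-step gradient-deviation bound ‖(I_M − Ā)·∇F(W^{t−1})‖ ≤ L_W · a · ‖W^t − W^{t−1}‖ holds for all 1 ≤ t ≤ T, where a is the operator norm of the linear map V ↦ (I_M − Ā)V on X. Then (1/(2η) − L_W/2 − (η/2)·L_W²·a²) · Σ_{t=1}^{T} ‖W^t − W^{t−1}‖² ≤ F(W^0) − F(W^T). In particular, if c := 1/(2η) − L_W/2 − (η/2)·L_W²·a² > 0, then (1/(T·M)) Σ_{t=1}^{T} ‖W^t − W^{t−1}‖² ≤ (F(W^0) − F(W^T)) / (T · M · c). (Theorem 2 of the paper: convergence of the optimality gap G(W^t) := ‖W^t − W^{t−1}‖² for FLT.) -/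
open scoped RealInnerProductSpace

theorem flt_descent {E : Type*} [NormedAddCommGroup E] [InnerProductSpace ℝ E] [CompleteSpace E]
    (F : E → ℝ) (g : E → E) (hF : ∀ V, HasGradientAt F (g V) V) (L : ℝ)
    (hL : ∀ U V, ‖g U - g V‖ ≤ L * ‖U - V‖) (x D : E) :
    F (x + D) ≤ F x + inner ℝ (g x) D + L / 2 * ‖D‖ ^ 2 := by
  have hd : ∀ s : ℝ, HasDerivAt
      (fun s : ℝ => F (x + s • D) - s * inner ℝ (g x) D - s ^ 2 * (L / 2 * ‖D‖ ^ 2))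
      (inner ℝ (g (x + s • D)) D - inner ℝ (g x) D - 2 * s * (L / 2 * ‖D‖ ^ 2)) s := by
    intro s
    have h1 : HasDerivAt (fun s : ℝ => x + s • D) D s := by
      simpa using ((hasDerivAt_id s).smul_const D).const_add x
    have h2 := (hF (x + s • D)).hasFDerivAt.comp_hasDerivAt s h1
    have h3 := (hasDerivAt_id s).mul_const (inner ℝ (g x) D)
    have h4 := (hasDerivAt_pow 2 s).mul_const (L / 2 * ‖D‖ ^ 2)
    have h5 := (h2.sub h3).sub h4
    exact h5.congr_deriv (by simp)
  have hanti := antitoneOn_of_deriv_nonpos (convex_Icc (0:ℝ) 1)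
    (f := fun s : ℝ => F (x + s • D) - s * inner ℝ (g x) D - s ^ 2 * (L / 2 * ‖D‖ ^ 2))
    (fun s _ => (hd s).continuousAt.continuousWithinAt)
    (fun s _ => (hd s).differentiableAt.differentiableWithinAt)
    (by
      intro s hs
      rw [interior_Icc] at hs
      rw [(hd s).deriv, ← inner_sub_left]
      have h1 := real_inner_le_norm (g (x + s • D) - g x) D
      have h2 := hL (x + s • D) x
      rw [add_sub_cancel_left, norm_smul, Real.norm_of_nonneg hs.1.le] at h2
      have h3 := mul_le_mul_of_nonneg_right h2 (norm_nonneg D)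
      nlinarith)
  have := hanti (Set.left_mem_Icc.2 zero_le_one) (Set.right_mem_Icc.2 zero_le_one) zero_le_one
  simp at this
  linarith

theorem flt_matLeftMul_sub (M d : ℕ) (A : Matrix (Fin M) (Fin M) ℝ)
    (v : EuclideanSpace ℝ (Fin M × Fin d)) :
    matLeftMul M d (1 - A) v = v - matLeftMul M d A v := by
  have h : Matrix.kroneckerMap (· * ·) (1 - A) (1 : Matrix (Fin d) (Fin d) ℝ)
      = 1 - Matrix.kroneckerMap (· * ·) A (1 : Matrix (Fin d) (Fin d) ℝ) := by
    ext ⟨i, i'⟩ ⟨j, j'⟩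
    by_cases h1 : i = j <;> by_cases h2 : i' = j' <;>
      simp [Matrix.kroneckerMap_apply, sub_mul, Matrix.one_apply, h1, h2]
  unfold matLeftMul
  rw [h, map_sub]
  simp

/-- Theorem 2 of the paper: convergence of the optimality gap
`G(W^t) = ‖W^t − W^{t−1}‖²` for FLT. -/
theorem flt_theorem2 (M d T : ℕ) (hM : 1 ≤ M) (hd : 1 ≤ d) (hT : 1 ≤ T)
    (Abar : Matrix (Fin M) (Fin M) ℝ)
    (F : EuclideanSpace ℝ (Fin M × Fin d) → ℝ)
    (gradF : EuclideanSpace ℝ (Fin M × Fin d) → EuclideanSpace ℝ (Fin M × Fin d))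
    (hF : ∀ V, HasGradientAt F (gradF V) V)
    (LW : ℝ)
    (hsmooth : ∀ U V : EuclideanSpace ℝ (Fin M × Fin d),
      ‖gradF U - gradF V‖ ≤ LW * ‖U - V‖)
    (η : ℝ) (hη : 0 < η)
    (W : ℕ → EuclideanSpace ℝ (Fin M × Fin d))
    (hupd : ∀ t : ℕ, 1 ≤ t → t ≤ T →
      W t - W (t - 1) = -(η • matLeftMul M d Abar (gradF (W (t - 1)))))
    (a : ℝ) (ha : a = ‖matLeftMul M d ((1 : Matrix (Fin M) (Fin M) ℝ) - Abar)‖)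
    (hdev : ∀ t : ℕ, 1 ≤ t → t ≤ T →
      ‖matLeftMul M d ((1 : Matrix (Fin M) (Fin M) ℝ) - Abar) (gradF (W (t - 1)))‖ ≤
        LW * a * ‖W t - W (t - 1)‖)
    (c : ℝ) (hc : c = 1 / (2 * η) - LW / 2 - (η / 2) * LW ^ 2 * a ^ 2) :
    c * (∑ t ∈ Finset.Icc 1 T, ‖W t - W (t - 1)‖ ^ 2) ≤ F (W 0) - F (W T) ∧
      (0 < c →
        (1 / ((T : ℝ) * (M : ℝ))) * (∑ t ∈ Finset.Icc 1 T, ‖W t - W (t - 1)‖ ^ 2) ≤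
          (F (W 0) - F (W T)) / ((T : ℝ) * (M : ℝ) * c)) := by
  have hstep : ∀ t : ℕ, 1 ≤ t → t ≤ T →
      c * ‖W t - W (t - 1)‖ ^ 2 ≤ F (W (t - 1)) - F (W t) := by
    intro t h1 h2
    have hu := hupd t h1 h2
    have hv := hdev t h1 h2
    have hds := flt_descent F gradF hF LW hsmooth (W (t - 1)) (W t - W (t - 1))
    rw [add_sub_cancel] at hds
    have he := flt_matLeftMul_sub M d Abar (gradF (W (t - 1)))
    set e := matLeftMul M d (1 - Abar) (gradF (W (t - 1)))
    set D := W t - W (t - 1)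
    have hg : η • gradF (W (t - 1)) = η • e - D := by
      rw [he, hu, smul_sub]; abel
    have hi : η * inner ℝ (gradF (W (t - 1))) D = η * inner ℝ e D - ‖D‖ ^ 2 := by
      rw [← real_inner_smul_left, hg, inner_sub_left, real_inner_smul_left,
        real_inner_self_eq_norm_sq]
    have hsq : ‖e‖ ^ 2 ≤ (LW * a * ‖D‖) ^ 2 := pow_le_pow_left₀ (norm_nonneg _) hv 2
    have hy : 0 ≤ ‖η • e - D‖ ^ 2 := by positivity
    rw [norm_sub_sq_real, real_inner_smul_left, norm_smul, Real.norm_of_nonneg hη.le] at hy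
    have hc2 : η * c = 1 / 2 - η * LW / 2 - η ^ 2 / 2 * LW ^ 2 * a ^ 2 := by
      rw [hc]; field_simp
    have hsq2 := mul_le_mul_of_nonneg_left hsq (sq_nonneg η)
    have hds2 := mul_le_mul_of_nonneg_left hds hη.le
    refine le_of_mul_le_mul_left ?_ hη
    rw [← mul_assoc, hc2]
    nlinarith
  have hsum : ∀ n : ℕ, n ≤ T →
      c * (∑ t ∈ Finset.Icc 1 n, ‖W t - W (t - 1)‖ ^ 2) ≤ F (W 0) - F (W n) := by
    intro n
    induction n with
    | zero => intro _; simp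
    | succ k ih =>
      intro hk
      have h1 := ih (by omega)
      have h2 := hstep (k + 1) (by omega) hk
      rw [Finset.sum_Icc_succ_top (by omega), mul_add]
      simp only [Nat.add_sub_cancel] at h2 ⊢
      linarith
  refine ⟨hsum T le_rfl, fun hcpos => ?_⟩
  have hMT : (0:ℝ) < (T : ℝ) * (M : ℝ) := by
    have : (0:ℝ) < T := by exact_mod_cast hT
    have : (0:ℝ) < M := by exact_mod_cast hM
    positivity
  rw [one_div, inv_mul_eq_div, div_le_div_iff₀ hMT (mul_pos hMT hcpos)]
  have := mul_le_mul_of_nonneg_left (hsum T le_rfl) hMT.le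
  linarith
end
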